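/- Assume Re(ν) > 0 and let ψ: (0,∞) → V be continuous, satisfy the Lewis equation at every x > 0, and satisfy x·ψ(x) → 0 as x → 0⁺. Then ψ is an eigenfunction with eigenvalue 1 of the transfer operator at 0, i.e. for every x > 0 one has ψ(x) = x^{−2ν−1}·Σ_{n=0}^∞ (n + 1/x)^{−2ν−1}·η(T(T')^n)^{−1}(ψ(1 + 1/(n + 1/x))). -/

import Mathlib

open Complex

/-- `SL₂(ℤ)`. -/
abbrev SL2Z := Matrix.SpecialLinearGroup (Fin 2) ℤ

/-- The matrix `T = [[1,1],[0,1]]`. -/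
def Tm : SL2Z := ⟨!![1, 1; 0, 1], by norm_num [Matrix.det_fin_two_of]⟩

/-- The matrix `S = [[0,1],[−1,0]]`. -/
def Sm : SL2Z := ⟨!![0, 1; -1, 0], by norm_num [Matrix.det_fin_two_of]⟩

/-- The matrix `T' = [[1,0],[1,1]]`. -/
def Tm' : SL2Z := ⟨!![1, 0; 1, 1], by norm_num [Matrix.det_fin_two_of]⟩

/-- The matrix `−I`. -/
def negI : SL2Z := ⟨!![-1, 0; 0, -1], by norm_num [Matrix.det_fin_two_of]⟩

/-- `ψ : (0,∞) → V` satisfies the Lewis equation with parameter `ν` at `x`. -/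
def LewisEqR {V : Type*} [NormedAddCommGroup V] [NormedSpace ℂ V]
    (η : SL2Z →* Module.End ℂ V) (ν : ℂ) (ψ : ℝ → V) (x : ℝ) : Prop :=
  η Tm (ψ x) =
    ψ (x + 1) +
      ((((x : ℂ) + 1)) ^ (-2 * ν - 1)) • η (Sm * Tm⁻¹) (ψ (x / (x + 1)))

/-!
After the inversion `φ(t) = t ^ (-2ν-1) ψ(1/t)` the Lewis equation becomes a first-order recurrence
along `t, t + 1, t + 2, …`:
`φ(t) = t ^ (-2ν-1) η(T)⁻¹ ψ(1 + 1/t) + η(T')⁻¹ φ(t + 1)`.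
Iterating it produces the partial sums of the transfer operator and the remainder
`η(T')⁻ⁿ φ(t + n)`. As `T'⁻¹ = S T S⁻¹`, the powers of `η(T')⁻¹` are bounded, so the remainder tends
to zero because `φ(t) → 0` as `t → ∞`, which amounts to `x ^ (2 Re ν + 1) ψ(x) → 0` as `x → 0⁺`. The
series converges absolutely because `ψ` is bounded near `1` and `2 Re ν + 1 > 1`.
-/

open Asymptotics Filter Topology NNReal

/-- An endomorphism of a normed space is power bounded if all its iterates satisfy one common
operator norm bound. It is stated for `Module.End`, the target of the representations here, so
continuity is part of the bound. -/
def IsPowerBounded {R E : Type*} [Semiring R] [SeminormedAddCommGroup E] [Module R E]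
    (A : Module.End R E) : Prop :=
  ∃ C : ℝ≥0, ∀ (n : ℕ) (v : E), ‖(A ^ n) v‖ ≤ C * ‖v‖

namespace IsPowerBounded

variable {𝕜 E : Type*} [NontriviallyNormedField 𝕜] [SeminormedAddCommGroup E] [NormedSpace 𝕜 E]
  {A : Module.End 𝕜 E}

theorem of_pow_eq_one (hA : Continuous A) {N : ℕ} (hN : 0 < N) (hAN : A ^ N = 1) :
    IsPowerBounded A := by
  have hpow (k : ℕ) : Continuous (A ^ k) := by
    rw [Module.End.coe_pow]
    exact hA.iterate k
  let B (k : ℕ) : E →L[𝕜] E := ⟨A ^ k, hpow k⟩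
  refine ⟨∑ k ∈ Finset.range N, ‖B k‖₊, fun n v ↦ ?_⟩
  have hmem : n % N ∈ Finset.range N := Finset.mem_range.2 (Nat.mod_lt n hN)
  calc ‖(A ^ n) v‖ = ‖B (n % N) v‖ := by rw [pow_eq_pow_mod n hAN]; rfl
    _ ≤ ‖B (n % N)‖ * ‖v‖ := (B (n % N)).le_opNorm v
    _ ≤ (∑ k ∈ Finset.range N, ‖B k‖₊ : ℝ≥0) * ‖v‖ := by
      gcongr
      exact Finset.single_le_sum (f := fun k ↦ ‖B k‖₊) (fun _ _ ↦ zero_le) hmem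

theorem conj (hA : IsPowerBounded A) (U : (Module.End 𝕜 E)ˣ)
    (hU : Continuous (U : Module.End 𝕜 E)) (hU' : Continuous (↑U⁻¹ : Module.End 𝕜 E)) :
    IsPowerBounded ((U : Module.End 𝕜 E) * A * (↑U⁻¹ : Module.End 𝕜 E)) := by
  obtain ⟨C, hC⟩ := hA
  let L : E →L[𝕜] E := ⟨U, hU⟩
  let L' : E →L[𝕜] E := ⟨↑U⁻¹, hU'⟩
  refine ⟨‖L‖₊ * (C * ‖L'‖₊), fun n v ↦ ?_⟩
  rw [Units.conj_pow]
  calc ‖L ((A ^ n) (L' v))‖ ≤ ‖L‖ * ‖(A ^ n) (L' v)‖ := L.le_opNorm _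
    _ ≤ ‖L‖ * (C * ‖L' v‖) := by gcongr; exact hC n _
    _ ≤ ‖L‖ * (C * (‖L'‖ * ‖v‖)) := by gcongr; exact L'.le_opNorm v
    _ = (‖L‖₊ * (C * ‖L'‖₊) : ℝ≥0) * ‖v‖ := by push_cast; ring

end IsPowerBounded

theorem eq_sum_range_pow_apply_add {R M : Type*} [Semiring R] [AddCommMonoid M] [Module R M]
    (A : Module.End R M) {u g : ℕ → M} (h : ∀ n, u n = g n + A (u (n + 1))) (n : ℕ) :
    u 0 = ∑ k ∈ Finset.range n, (A ^ k) (g k) + (A ^ n) (u n) := by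
  induction n with
  | zero => simp
  | succ n ih =>
    rw [ih, h n, map_add, ← add_assoc, ← Finset.sum_range_succ, ← Module.End.mul_apply, ← pow_succ]

theorem IsPowerBounded.hasSum_pow_apply {R E : Type*} [Semiring R]
    [SeminormedAddCommGroup E] [Module R E] {A : Module.End R E} (hA : IsPowerBounded A)
    {u g : ℕ → E} (h : ∀ n, u n = g n + A (u (n + 1))) (hu : Tendsto u atTop (𝓝 0))
    (hg : Summable fun n ↦ ‖g n‖) :
    HasSum (fun n ↦ (A ^ n) (g n)) (u 0) := by
  obtain ⟨C, hC⟩ := hA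
  have hsummable : Summable fun n ↦ ‖(A ^ n) (g n)‖ :=
    .of_nonneg_of_le (fun _ ↦ norm_nonneg _) (fun n ↦ hC n (g n)) (hg.mul_left (C : ℝ))
  have hremainder : Tendsto (fun n ↦ (A ^ n) (u n)) atTop (𝓝 0) :=
    squeeze_zero_norm (fun n ↦ hC n (u n)) (by simpa using hu.norm.const_mul (C : ℝ))
  rw [hasSum_iff_tendsto_nat_of_summable_norm hsummable]
  have hconst : Tendsto (fun n ↦ ∑ k ∈ Finset.range n, (A ^ k) (g k) + (A ^ n) (u n)) atTop
      (𝓝 (u 0)) := by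
    simp only [← eq_sum_range_pow_apply_add A h, tendsto_const_nhds]
  simpa only [add_sub_cancel_right, sub_zero] using hconst.sub hremainder

theorem isLittleO_rpow_of_tendsto_smul_zero {E : Type*} [SeminormedAddCommGroup E]
    [NormedSpace ℝ E] {f : ℝ → E} {a : ℝ} (ha : a ≤ -1)
    (hf : Tendsto (fun x ↦ x • f x) (𝓝[>] 0) (𝓝 0)) :
    f =o[𝓝[>] 0] fun x ↦ x ^ a := by
  have hinv : f =o[𝓝[>] 0] fun x : ℝ ↦ x ^ (-1 : ℝ) := by
    have hsmul := (isBigO_refl (fun x : ℝ ↦ x⁻¹) (𝓝[>] 0)).smul_isLittleO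
      ((isLittleO_one_iff ℝ).2 hf)
    refine hsmul.congr' ?_ ?_
    · filter_upwards [self_mem_nhdsWithin] with x hx
      exact inv_smul_smul₀ (ne_of_gt hx) _
    · filter_upwards with x
      simp [Real.rpow_neg_one]
  refine hinv.trans_isBigO (.of_bound' ?_)
  filter_upwards [Ioo_mem_nhdsGT one_pos] with x ⟨hx0, hx1⟩
  rw [Real.norm_of_nonneg (by positivity), Real.norm_of_nonneg (by positivity)]
  exact Real.rpow_le_rpow_of_exponent_ge hx0 hx1.le ha

theorem Tm_inv_mul_Sm_mul_Tm_inv : Tm⁻¹ * (Sm * Tm⁻¹) = Tm'⁻¹ := by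
  decide

theorem Sm_mul_Tm_mul_Sm_inv : Sm * Tm * Sm⁻¹ = Tm'⁻¹ := by
  decide

theorem map_Tm_mul_Tm'_pow_inv_apply {R M : Type*} [Semiring R] [AddCommMonoid M] [Module R M]
    (η : SL2Z →* Module.End R M) (n : ℕ) (v : M) :
    η (Tm * Tm' ^ n)⁻¹ v = (η Tm'⁻¹ ^ n) (η Tm⁻¹ v) := by
  rw [mul_inv_rev, map_mul, Module.End.mul_apply, ← inv_pow, map_pow]

theorem IsPowerBounded.map_Tm'_inv {𝕜 E : Type*} [NontriviallyNormedField 𝕜]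
    [SeminormedAddCommGroup E] [NormedSpace 𝕜 E] {η : SL2Z →* Module.End 𝕜 E}
    (hηT : IsPowerBounded (η Tm)) (hηS : Continuous (η Sm)) (hηS' : Continuous (η Sm⁻¹)) :
    IsPowerBounded (η Tm'⁻¹) := by
  have hU : (↑(η.toHomUnits Sm)⁻¹ : Module.End 𝕜 E) = η Sm⁻¹ := by
    rw [← map_inv, MonoidHom.coe_toHomUnits]
  have hconj := hηT.conj (η.toHomUnits Sm) hηS (hU ▸ hηS')
  rwa [hU, MonoidHom.coe_toHomUnits, ← map_mul, ← map_mul, Sm_mul_Tm_mul_Sm_inv] at hconj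

section Inversion

variable {V : Type*} [NormedAddCommGroup V] [NormedSpace ℂ V] {ν : ℂ} {ψ : ℝ → V}

/-- The inversion `t ↦ t ^ (-2ν-1) • ψ (1/t)`, the weight `2ν + 1` action of `x ↦ 1/x`. It moves
the behaviour of `ψ` at `0` to infinity and turns the substitution `x ↦ x / (x + 1)` of the Lewis
equation into the translation `t ↦ t + 1`. -/
noncomputable def lewisInversion (ν : ℂ) (ψ : ℝ → V) (t : ℝ) : V :=
  (t : ℂ) ^ (-2 * ν - 1) • ψ (1 / t)

theorem norm_ofReal_cpow_neg_two_mul_sub_one (ν : ℂ) {t : ℝ} (ht : 0 < t) :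
    ‖(t : ℂ) ^ (-2 * ν - 1)‖ = t ^ (-2 * ν.re - 1) := by
  simp [Complex.norm_cpow_eq_rpow_re_of_pos ht]

theorem lewisInversion_lewisInversion {x : ℝ} (hx : 0 < x) :
    lewisInversion ν (lewisInversion ν ψ) x = ψ x := by
  rw [lewisInversion, lewisInversion, smul_smul,
    ← Complex.mul_cpow_ofReal_nonneg hx.le (by positivity), ← Complex.ofReal_mul,
    mul_one_div_cancel hx.ne', one_div_one_div, Complex.ofReal_one, Complex.one_cpow, one_smul]

theorem tendsto_lewisInversion_atTop (hψ : ψ =o[𝓝[>] 0] fun x ↦ x ^ (-2 * ν.re - 1)) :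
    Tendsto (lewisInversion ν ψ) atTop (𝓝 0) := by
  have hinv : (fun t : ℝ ↦ ψ (1 / t)) =o[atTop] fun t : ℝ ↦ (1 / t) ^ (-2 * ν.re - 1) :=
    hψ.comp_tendsto (tendsto_inv_atTop_nhdsGT_zero.congr fun t ↦ (one_div t).symm)
  have hpow : (fun t : ℝ ↦ (t : ℂ) ^ (-2 * ν - 1)) =O[atTop] fun t : ℝ ↦ t ^ (-2 * ν.re - 1) := by
    refine .of_bound' ?_
    filter_upwards [eventually_gt_atTop 0] with t ht
    exact (norm_ofReal_cpow_neg_two_mul_sub_one ν ht).trans_le (le_abs_self _)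
  rw [← isLittleO_one_iff ℝ]
  refine (hpow.smul_isLittleO hinv).congr' .rfl ?_
  filter_upwards [eventually_gt_atTop 0] with t ht
  rw [smul_eq_mul, ← Real.mul_rpow ht.le (by positivity), mul_one_div_cancel ht.ne',
    Real.one_rpow]

theorem LewisEqR.lewisInversion_eq {η : SL2Z →* Module.End ℂ V} {t : ℝ} (ht : 0 < t)
    (h : LewisEqR η ν ψ (1 / t)) :
    lewisInversion ν ψ t = (t : ℂ) ^ (-2 * ν - 1) • η Tm⁻¹ (ψ (1 + 1 / t)) +
      η Tm'⁻¹ (lewisInversion ν ψ (t + 1)) := by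
  have hTm (v : V) : η Tm⁻¹ (η Tm v) = v := by
    rw [← Module.End.mul_apply, ← map_mul, inv_mul_cancel, map_one, Module.End.one_apply]
  have hTm' (v : V) : η Tm⁻¹ (η (Sm * Tm⁻¹) v) = η Tm'⁻¹ v := by
    rw [← Module.End.mul_apply, ← map_mul, Tm_inv_mul_Sm_mul_Tm_inv]
  have harg : 1 / t / (1 / t + 1) = 1 / (t + 1) := by field_simp; ring
  have hfactor : (t : ℂ) ^ (-2 * ν - 1) * (((1 / t : ℝ) : ℂ) + 1) ^ (-2 * ν - 1) =
      ((t + 1 : ℝ) : ℂ) ^ (-2 * ν - 1) := by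
    rw [← Complex.ofReal_one, ← Complex.ofReal_add,
      ← Complex.mul_cpow_ofReal_nonneg ht.le (by positivity), ← Complex.ofReal_mul, mul_add,
      mul_one_div_cancel ht.ne', mul_one, add_comm t]
  have hψ : ψ (1 / t) = η Tm⁻¹ (ψ (1 + 1 / t)) +
      (((1 / t : ℝ) : ℂ) + 1) ^ (-2 * ν - 1) • η Tm'⁻¹ (ψ (1 / (t + 1))) := by
    have := congrArg (η Tm⁻¹) h
    rwa [map_add, map_smul, hTm, hTm', harg, add_comm (1 / t) 1] at this
  rw [lewisInversion, hψ, smul_add, smul_smul, hfactor, lewisInversion, map_smul]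

theorem summable_norm_cpow_smul_of_isBigO_one {f : ℝ → V} (hν : 0 < ν.re)
    (hf : f =O[𝓝[>] 1] fun _ ↦ (1 : ℝ)) {t : ℝ} (ht : 0 < t) :
    Summable fun n : ℕ ↦ ‖((n + t : ℝ) : ℂ) ^ (-2 * ν - 1) • f (1 + 1 / (n + t))‖ := by
  have hatTop : Tendsto (fun n : ℕ ↦ (n : ℝ) + t) atTop atTop :=
    tendsto_atTop_add_const_right _ _ tendsto_natCast_atTop_atTop
  have harg : Tendsto (fun n : ℕ ↦ 1 + 1 / ((n : ℝ) + t)) atTop (𝓝[>] 1) := by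
    refine tendsto_nhdsWithin_iff.2 ⟨?_, .of_forall fun n ↦ ?_⟩
    · simpa using hatTop.inv_tendsto_atTop.const_add 1
    · have : 0 < 1 / ((n : ℝ) + t) := by positivity
      exact lt_add_of_pos_right 1 this
  have hpow : (fun n : ℕ ↦ ((n + t : ℝ) : ℂ) ^ (-2 * ν - 1)) =O[atTop]
      fun n : ℕ ↦ 1 / |(n : ℝ) + t| ^ (2 * ν.re + 1) := by
    refine .of_norm_le fun n ↦ ?_
    have hpos : 0 < n + t := by positivity
    rw [norm_ofReal_cpow_neg_two_mul_sub_one ν hpos, abs_of_pos hpos, one_div,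
      ← Real.rpow_neg hpos.le]
    exact (congrArg _ (by ring)).le
  refine summable_of_isBigO_nat
    ((Real.summable_one_div_nat_add_rpow t (2 * ν.re + 1)).2 (by linarith)) (IsBigO.norm_left ?_)
  simpa using hpow.smul (hf.comp_tendsto harg)

end Inversion

theorem stmt13_general {V : Type*} [NormedAddCommGroup V] [NormedSpace ℂ V]
    (η : SL2Z →* Module.End ℂ V) (hηcont : ∀ g, Continuous (η g)) (hηTm : IsPowerBounded (η Tm))
    (ν : ℂ) (hν : 0 < ν.re)
    (ψ : ℝ → V) (hψ1 : ψ =O[𝓝[>] 1] fun _ ↦ (1 : ℝ))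
    (hψlewis : ∀ x : ℝ, 0 < x → LewisEqR η ν ψ x)
    (hψ0 : ψ =o[𝓝[>] 0] fun x ↦ x ^ (-2 * ν.re - 1)) (x : ℝ) (hx : 0 < x) :
    Summable (fun n : ℕ ↦ (((n : ℝ) + 1 / x : ℝ) : ℂ) ^ (-2 * ν - 1) •
        η (Tm * Tm' ^ n)⁻¹ (ψ (1 + 1 / ((n : ℝ) + 1 / x)))) ∧
      ψ x = (x : ℂ) ^ (-2 * ν - 1) •
        ∑' n : ℕ, (((n : ℝ) + 1 / x : ℝ) : ℂ) ^ (-2 * ν - 1) •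
          η (Tm * Tm' ^ n)⁻¹ (ψ (1 + 1 / ((n : ℝ) + 1 / x))) := by
  have hx' : 0 < 1 / x := by positivity
  have hrec (n : ℕ) : lewisInversion ν ψ (n + 1 / x) =
      ((n + 1 / x : ℝ) : ℂ) ^ (-2 * ν - 1) • η Tm⁻¹ (ψ (1 + 1 / (n + 1 / x))) +
        η Tm'⁻¹ (lewisInversion ν ψ ((n + 1 : ℕ) + 1 / x)) := by
    rw [Nat.cast_succ, add_right_comm]
    exact (hψlewis _ (by positivity)).lewisInversion_eq (by positivity)
  have hlim : Tendsto (fun n : ℕ ↦ lewisInversion ν ψ (n + 1 / x)) atTop (𝓝 0) :=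
    (tendsto_lewisInversion_atTop hψ0).comp
      (tendsto_atTop_add_const_right _ _ tendsto_natCast_atTop_atTop)
  have hbdd : (fun y ↦ η Tm⁻¹ (ψ y)) =O[𝓝[>] 1] fun _ ↦ (1 : ℝ) :=
    ((⟨η Tm⁻¹, hηcont _⟩ : V →L[ℂ] V).isBigO_comp ψ _).trans hψ1
  have hsum := (hηTm.map_Tm'_inv (hηcont _) (hηcont _)).hasSum_pow_apply hrec hlim
    (summable_norm_cpow_smul_of_isBigO_one hν hbdd hx')
  simp only [map_smul, ← map_Tm_mul_Tm'_pow_inv_apply, Nat.cast_zero, zero_add] at hsum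
  refine ⟨hsum.summable, ?_⟩
  rw [hsum.tsum_eq]
  exact (lewisInversion_lewisInversion hx).symm

/-- If `Re(ν) > 0`, `ψ` is continuous on `(0,∞)`, satisfies the Lewis equation
there, and `x·ψ(x) → 0` as `x → 0⁺`, then `ψ` is an eigenfunction with
eigenvalue `1` of the transfer operator at `0`. -/
theorem stmt13 {V : Type*} [NormedAddCommGroup V] [NormedSpace ℂ V]
    [FiniteDimensional ℂ V] [Nontrivial V]
    (η : SL2Z →* Module.End ℂ V) (hη : η negI = 1)
    (N : ℕ) (hN : 0 < N) (hord : η Tm ^ N = 1)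
    (ν : ℂ) (hν : 0 < ν.re)
    (ψ : ℝ → V) (hψcont : ContinuousOn ψ (Set.Ioi (0 : ℝ)))
    (hψlewis : ∀ x : ℝ, 0 < x → LewisEqR η ν ψ x)
    (hψ0 : Filter.Tendsto (fun x : ℝ => x • ψ x)
      (nhdsWithin 0 (Set.Ioi (0 : ℝ))) (nhds 0)) :
    ∀ x : ℝ, 0 < x →
      ψ x = (((x : ℂ)) ^ (-2 * ν - 1)) •
        ∑' n : ℕ, (((((n : ℝ) + 1 / x : ℝ) : ℂ)) ^ (-2 * ν - 1)) •
          η ((Tm * Tm' ^ n)⁻¹) (ψ (1 + 1 / ((n : ℝ) + 1 / x))) := by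
  intro x hx
  have hbdd : ψ =O[𝓝[>] 1] fun _ ↦ (1 : ℝ) :=
    ((hψcont.continuousAt (Ioi_mem_nhds one_pos)).isBigO_one ℝ).mono nhdsWithin_le_nhds
  exact (stmt13_general η (fun g ↦ (η g).continuous_of_finiteDimensional)
    (.of_pow_eq_one (η Tm).continuous_of_finiteDimensional hN hord) ν hν ψ hbdd hψlewis
    (isLittleO_rpow_of_tendsto_smul_zero (by linarith) hψ0) x hx).2
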